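/- arXiv:2009.10024 — 2 statements merged into one kernel-verified Lean document; each statement's English description precedes it below -/
import Mathlib

section
/- Let 𝒲 be a weakly exact structure on an additive category 𝒜. Then every admissible monic of 𝒲 is a semi-stable kernel and every admissible epic of 𝒲 is a semi-stable cokernel; consequently every pair in 𝒲 is a stable short exact sequence, so 𝒲 is contained in the class 𝓔_sta of stable short exact sequences of 𝒜. -/
open CategoryTheory CategoryTheory.Limits ZeroObject

universe w v u

namespace WeaklyExactPaper

section Preamble

variable {C : Type u} [Category.{v} C] [Preadditive C] [HasZeroObject C] [HasBinaryBiproducts C]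

/-- `(i, d)` is a kernel–cokernel pair: `i` is a kernel of `d` and `d` is a cokernel of `i`. -/
structure IsKernelCokernelPair {A B Z : C} (i : A ⟶ B) (d : B ⟶ Z) : Prop where
  w : i ≫ d = 0
  isKernel : Nonempty (IsLimit (KernelFork.ofι i w))
  isCokernel : Nonempty (IsColimit (CokernelCofork.ofπ d w))

/-- Isomorphism of composable pairs `(i, d) ≅ (i', d')`. -/
def PairIso {A B Z A' B' Z' : C} (i : A ⟶ B) (d : B ⟶ Z) (i' : A' ⟶ B') (d' : B' ⟶ Z') : Prop :=
  ∃ (eA : A ≅ A') (eB : B ≅ B') (eZ : Z ≅ Z'),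
    i ≫ eB.hom = eA.hom ≫ i' ∧ d ≫ eZ.hom = eB.hom ≫ d'

/-- `f` is a kernel of some morphism. -/
def IsSomeKernel {A B : C} (f : A ⟶ B) : Prop :=
  ∃ (Z : C) (g : B ⟶ Z) (w : f ≫ g = 0), Nonempty (IsLimit (KernelFork.ofι f w))

/-- `g` is a cokernel of some morphism. -/
def IsSomeCokernel {B Z : C} (g : B ⟶ Z) : Prop :=
  ∃ (A : C) (f : A ⟶ B) (w : f ≫ g = 0), Nonempty (IsColimit (CokernelCofork.ofπ g w))

/-- `f` admits a cokernel. -/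
def AdmitsCokernel {A B : C} (f : A ⟶ B) : Prop :=
  ∃ (Z : C) (g : B ⟶ Z) (w : f ≫ g = 0), Nonempty (IsColimit (CokernelCofork.ofπ g w))

/-- `g` admits a kernel. -/
def AdmitsKernel {B Z : C} (g : B ⟶ Z) : Prop :=
  ∃ (A : C) (f : A ⟶ B) (w : f ≫ g = 0), Nonempty (IsLimit (KernelFork.ofι f w))

/-- A weakly exact structure on an additive category: a class of kernel–cokernel pairs,
closed under isomorphisms of composable pairs and binary direct sums, containing the pairs
`(1_X, X ⟶ 0)` and `(0 ⟶ X, 1_X)`, and satisfying the pushout axiom (E2) and the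
pullback axiom (E2)ᵒᵖ. -/
structure WeaklyExactStructure (C : Type u) [Category.{v} C] [Preadditive C]
    [HasZeroObject C] [HasBinaryBiproducts C] where
  W : ∀ ⦃A B Z : C⦄, (A ⟶ B) → (B ⟶ Z) → Prop
  kc_of_mem : ∀ {A B Z : C} {i : A ⟶ B} {d : B ⟶ Z}, W i d → IsKernelCokernelPair i d
  iso_closed : ∀ {A B Z A' B' Z' : C} {i : A ⟶ B} {d : B ⟶ Z} {i' : A' ⟶ B'} {d' : B' ⟶ Z'},
    W i d → PairIso i d i' d' → W i' d'
  sum_mem : ∀ {A₁ B₁ Z₁ A₂ B₂ Z₂ : C} {i₁ : A₁ ⟶ B₁} {d₁ : B₁ ⟶ Z₁} {i₂ : A₂ ⟶ B₂}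
    {d₂ : B₂ ⟶ Z₂}, W i₁ d₁ → W i₂ d₂ → W (biprod.map i₁ i₂) (biprod.map d₁ d₂)
  id_zero_mem : ∀ X : C, W (𝟙 X) (0 : X ⟶ (0 : C))
  zero_id_mem : ∀ X : C, W (0 : (0 : C) ⟶ X) (𝟙 X)
  pushout_mem : ∀ {A B Z A' : C} {i : A ⟶ B} {d : B ⟶ Z}, W i d → ∀ t : A ⟶ A',
    ∃ (S : C) (g : B ⟶ S) (i' : A' ⟶ S), IsPushout i t g i' ∧ ∃ (Z' : C) (d' : S ⟶ Z'), W i' d'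
  pullback_mem : ∀ {A B Z D : C} {i : A ⟶ B} {d : B ⟶ Z}, W i d → ∀ t : D ⟶ Z,
    ∃ (P : C) (p : P ⟶ B) (q : P ⟶ D), IsPullback p q d t ∧ ∃ (A'' : C) (i'' : A'' ⟶ P), W i'' q

/-- `i` is an admissible monic of `𝒲`. -/
def AdmissibleMonic (𝒲 : WeaklyExactStructure C) {A B : C} (i : A ⟶ B) : Prop :=
  ∃ (Z : C) (d : B ⟶ Z), 𝒲.W i d

/-- `d` is an admissible epic of `𝒲`. -/
def AdmissibleEpic (𝒲 : WeaklyExactStructure C) {B Z : C} (d : B ⟶ Z) : Prop :=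
  ∃ (A : C) (i : A ⟶ B), 𝒲.W i d

/-- `(i, d)` is a split kernel–cokernel pair. -/
def IsSplitPair {A B Z : C} (i : A ⟶ B) (d : B ⟶ Z) : Prop :=
  ∃ (X Y : C), PairIso (biprod.inl : X ⟶ X ⊞ Y) (biprod.snd : X ⊞ Y ⟶ Y) i d

end Preamble

section Statement

variable {C : Type u} [Category.{v} C] [Preadditive C] [HasZeroObject C] [HasBinaryBiproducts C]

/-- `f` is a semi-stable kernel: `f` is a kernel and for every pushout square of `f` along any
morphism, the morphism opposite `f` is again a kernel. -/
def SemiStableKernel {A B : C} (f : A ⟶ B) : Prop :=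
  IsSomeKernel f ∧ ∀ {C' S : C} (t : A ⟶ C') (sB : B ⟶ S) (sC : C' ⟶ S),
    IsPushout f t sB sC → IsSomeKernel sC

/-- `g` is a semi-stable cokernel: `g` is a cokernel and for every pullback square of `g`
along any morphism, the morphism opposite `g` is again a cokernel. -/
def SemiStableCokernel {B Z : C} (g : B ⟶ Z) : Prop :=
  IsSomeCokernel g ∧ ∀ {D P : C} (t : D ⟶ Z) (pB : P ⟶ B) (pD : P ⟶ D),
    IsPullback pB pD g t → IsSomeCokernel pD

/-- Every pair of a weakly exact structure is a stable short exact sequence: its admissible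
monic is a semi-stable kernel and its admissible epic is a semi-stable cokernel. Hence any
weakly exact structure is contained in the class of stable short exact sequences. -/
theorem statement14 (𝒲 : WeaklyExactStructure C) {A B Z : C} {i : A ⟶ B} {d : B ⟶ Z}
    (h : 𝒲.W i d) :
    IsKernelCokernelPair i d ∧ SemiStableKernel i ∧ SemiStableCokernel d := by
  have hk := 𝒲.kc_of_mem h
  refine ⟨hk, ⟨⟨_, d, hk.w, hk.isKernel⟩, ?_⟩, ⟨⟨_, i, hk.w, hk.isCokernel⟩, ?_⟩⟩
  · intro C' S t sB sC hp
    obtain ⟨S', g, i', hp', Z', d', hW⟩ := 𝒲.pushout_mem h t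
    let e : S' ≅ S := hp'.isoIsPushout _ _ hp
    have he : i' ≫ e.hom = sC := hp'.inr_isoIsPushout_hom _ _ hp
    have hW' : 𝒲.W sC (e.inv ≫ d') :=
      𝒲.iso_closed hW ⟨Iso.refl _, e, Iso.refl _, by simp [he], by simp⟩
    have hk' := 𝒲.kc_of_mem hW'
    exact ⟨_, _, hk'.w, hk'.isKernel⟩
  · intro D P t pB pD hp
    obtain ⟨P', p, q, hp', A', i', hW⟩ := 𝒲.pullback_mem h t
    let e : P' ≅ P := hp'.isoIsPullback _ _ hp
    have he : e.hom ≫ pD = q := hp'.isoIsPullback_hom_snd _ _ hp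
    have hW' : 𝒲.W (i' ≫ e.hom) pD :=
      𝒲.iso_closed hW ⟨Iso.refl _, e, Iso.refl _, by simp, by simp [he]⟩
    have hk' := 𝒲.kc_of_mem hW'
    exact ⟨_, _, hk'.w, hk'.isCokernel⟩

end Statement

end WeaklyExactPaper
end

section
/- Let 𝒜 be an additive Hom-finite Krull–Schmidt category (every object is a finite direct sum of objects with local endomorphism rings) and let α = (i : A ⟶ B, d : B ⟶ C) be an almost split (Auslander–Reiten) sequence in 𝒜. Let 𝓔_α be the class of all kernel–cokernel pairs isomorphic to a direct sum σ ⊕ τ where σ is a split kernel–cokernel pair and τ is a finite direct sum of copies of α. Then 𝓔_α is a weakly exact structure on 𝒜 and it is an atom in the lattice of weakly exact structures on 𝒜: any weakly exact structure 𝒲 with 𝒲 ⊆ 𝓔_α equals either the split structure 𝓔_min or 𝓔_α. -/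
open CategoryTheory CategoryTheory.Limits ZeroObject

universe w v u

namespace WeaklyExactPaper

section Statement

variable {C : Type u} [Category.{v} C] [Preadditive C] [HasZeroObject C] [HasBinaryBiproducts C] [HasFiniteBiproducts C]

/-- `X` is indecomposable: nonzero, and in any direct sum decomposition one summand is zero. -/
def Indecomposable' (X : C) : Prop :=
  ¬ IsZero X ∧ ∀ U V : C, Nonempty (X ≅ U ⊞ V) → IsZero U ∨ IsZero V

/-- `(i, d)` is an almost split (Auslander–Reiten) sequence: a non-split kernel–cokernel pair
with indecomposable end terms such that every non-split-mono out of `A` factors through `i`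
and every non-split-epi into `Z` factors through `d`. -/
def IsAlmostSplit {A B Z : C} (i : A ⟶ B) (d : B ⟶ Z) : Prop :=
  IsKernelCokernelPair i d ∧ ¬ IsSplitPair i d ∧
  Indecomposable' A ∧ Indecomposable' Z ∧
  (∀ {X : C} (f : A ⟶ X), ¬ (∃ r : X ⟶ A, f ≫ r = 𝟙 A) → ∃ h : B ⟶ X, i ≫ h = f) ∧
  (∀ {X : C} (f : X ⟶ Z), ¬ (∃ s : Z ⟶ X, s ≫ f = 𝟙 Z) → ∃ h : X ⟶ B, h ≫ d = f)

/-- `(i', d')` is isomorphic to the direct sum of a split pair and of `n` copies of the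
pair `(i, d)`. -/
def InEAlpha {A B Z : C} (i : A ⟶ B) (d : B ⟶ Z)
    {A' B' Z' : C} (i' : A' ⟶ B') (d' : B' ⟶ Z') : Prop :=
  ∃ (X Y : C) (n : ℕ), PairIso
    (biprod.map (biprod.inl : X ⟶ X ⊞ Y) (biproduct.map (fun _ : Fin n => i)))
    (biprod.map (biprod.snd : X ⊞ Y ⟶ Y) (biproduct.map (fun _ : Fin n => d)))
    i' d'

set_option linter.unusedSectionVars false
set_option linter.unusedSimpArgs false

lemma kc_iff {A B Z : C} {i : A ⟶ B} {d : B ⟶ Z} : IsKernelCokernelPair i d ↔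
    (i ≫ d = 0 ∧ (∀ {W : C} (x : W ⟶ A), x ≫ i = 0 → x = 0) ∧
      (∀ {W : C} (x : Z ⟶ W), d ≫ x = 0 → x = 0) ∧
      (∀ {W : C} (x : W ⟶ B), x ≫ d = 0 → ∃ y, y ≫ i = x) ∧
      (∀ {W : C} (x : B ⟶ W), i ≫ x = 0 → ∃ y, d ≫ y = x)) := by
  constructor
  · rintro ⟨w, ⟨h1⟩, ⟨h2⟩⟩
    refine ⟨w, ?_, ?_, ?_, ?_⟩
    · intro W x hx
      exact Fork.IsLimit.hom_ext h1 (by simpa using hx)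
    · intro W x hx
      exact Cofork.IsColimit.hom_ext h2 (by simpa using hx)
    · intro W x hx
      exact ⟨_, (KernelFork.IsLimit.lift' h1 x hx).2⟩
    · intro W x hx
      exact ⟨_, (CokernelCofork.IsColimit.desc' h2 x hx).2⟩
  · rintro ⟨w, h1, h2, h3, h4⟩
    refine ⟨w, ⟨?_⟩, ⟨?_⟩⟩
    · refine KernelFork.IsLimit.ofι _ _ (fun x hx => (h3 x hx).choose)
        (fun x hx => (h3 x hx).choose_spec) (fun x hx m hm => ?_)
      refine sub_eq_zero.1 (h1 _ ?_)
      rw [Preadditive.sub_comp, hm, (h3 x hx).choose_spec, sub_self]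
    · refine CokernelCofork.IsColimit.ofπ _ _ (fun x hx => (h4 x hx).choose)
        (fun x hx => (h4 x hx).choose_spec) (fun x hx m hm => ?_)
      refine sub_eq_zero.1 (h2 _ ?_)
      rw [Preadditive.comp_sub, hm, (h4 x hx).choose_spec, sub_self]

lemma mk_pushout {A B A' S : C} {i : A ⟶ B} {t : A ⟶ A'} {g : B ⟶ S} {i' : A' ⟶ S}
    (comm : i ≫ g = t ≫ i')
    (ex : ∀ {W : C} (x : B ⟶ W) (y : A' ⟶ W), i ≫ x = t ≫ y → ∃ z, g ≫ z = x ∧ i' ≫ z = y)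
    (un : ∀ {W : C} (z : S ⟶ W), g ≫ z = 0 → i' ≫ z = 0 → z = 0) : IsPushout i t g i' := by
  refine ⟨⟨comm⟩, ⟨PushoutCocone.IsColimit.mk comm
    (fun s => (ex s.inl s.inr s.condition).choose)
    (fun s => (ex s.inl s.inr s.condition).choose_spec.1)
    (fun s => (ex s.inl s.inr s.condition).choose_spec.2) ?_⟩⟩
  intro s m h1 h2
  have h := (ex s.inl s.inr s.condition).choose_spec
  refine sub_eq_zero.1 (un _ ?_ ?_)
  · rw [Preadditive.comp_sub, h1, h.1, sub_self]
  · rw [Preadditive.comp_sub, h2, h.2, sub_self]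

lemma mk_pullback {P B D Z : C} {p : P ⟶ B} {q : P ⟶ D} {d : B ⟶ Z} {t : D ⟶ Z}
    (comm : p ≫ d = q ≫ t)
    (ex : ∀ {W : C} (x : W ⟶ B) (y : W ⟶ D), x ≫ d = y ≫ t → ∃ z, z ≫ p = x ∧ z ≫ q = y)
    (un : ∀ {W : C} (z : W ⟶ P), z ≫ p = 0 → z ≫ q = 0 → z = 0) : IsPullback p q d t := by
  refine ⟨⟨comm⟩, ⟨PullbackCone.IsLimit.mk comm
    (fun s => (ex s.fst s.snd s.condition).choose)
    (fun s => (ex s.fst s.snd s.condition).choose_spec.1)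
    (fun s => (ex s.fst s.snd s.condition).choose_spec.2) ?_⟩⟩
  intro s m h1 h2
  have h := (ex s.fst s.snd s.condition).choose_spec
  refine sub_eq_zero.1 (un _ ?_ ?_)
  · rw [Preadditive.sub_comp, h1, h.1, sub_self]
  · rw [Preadditive.sub_comp, h2, h.2, sub_self]

lemma fst_inl_of_zero {X Y : C} (hY : IsZero Y) : biprod.fst ≫ biprod.inl = 𝟙 (X ⊞ Y) := by
  apply biprod.hom_ext'
  · simp
  · exact hY.eq_of_src _ _

/-! ### isomorphisms of pairs -/

lemma PairIso.rfl' {A B Z : C} (i : A ⟶ B) (d : B ⟶ Z) : PairIso i d i d :=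
  ⟨Iso.refl _, Iso.refl _, Iso.refl _, by simp, by simp⟩

lemma PairIso.symm' {A B Z A' B' Z' : C} {i : A ⟶ B} {d : B ⟶ Z} {i' : A' ⟶ B'} {d' : B' ⟶ Z'}
    (h : PairIso i d i' d') : PairIso i' d' i d := by
  obtain ⟨a, b, z, h1, h2⟩ := h
  refine ⟨a.symm, b.symm, z.symm, ?_, ?_⟩
  · simp only [Iso.symm_hom]
    rw [Iso.comp_inv_eq, Category.assoc, h1, Iso.inv_hom_id_assoc]
  · simp only [Iso.symm_hom]
    rw [Iso.comp_inv_eq, Category.assoc, h2, Iso.inv_hom_id_assoc]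

lemma PairIso.trans' {A B Z A' B' Z' A₂ B₂ Z₂ : C} {i : A ⟶ B} {d : B ⟶ Z} {i' : A' ⟶ B'}
    {d' : B' ⟶ Z'} {i₂ : A₂ ⟶ B₂} {d₂ : B₂ ⟶ Z₂}
    (h : PairIso i d i' d') (h' : PairIso i' d' i₂ d₂) : PairIso i d i₂ d₂ := by
  obtain ⟨a, b, z, h1, h2⟩ := h
  obtain ⟨a', b', z', h1', h2'⟩ := h'
  refine ⟨a ≪≫ a', b ≪≫ b', z ≪≫ z', ?_, ?_⟩
  · simp [reassoc_of% h1, h1']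
  · simp [reassoc_of% h2, h2']

lemma PairIso.sum {A B Z A' B' Z' : C} {i : A ⟶ B} {d : B ⟶ Z} {i' : A' ⟶ B'} {d' : B' ⟶ Z'}
    {A₁ B₁ Z₁ A₁' B₁' Z₁' : C} {i₁ : A₁ ⟶ B₁} {d₁ : B₁ ⟶ Z₁} {i₁' : A₁' ⟶ B₁'} {d₁' : B₁' ⟶ Z₁'}
    (h : PairIso i d i' d') (h' : PairIso i₁ d₁ i₁' d₁') :
    PairIso (biprod.map i i₁) (biprod.map d d₁) (biprod.map i' i₁') (biprod.map d' d₁') := by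
  obtain ⟨a, b, z, h1, h2⟩ := h
  obtain ⟨a', b', z', h1', h2'⟩ := h'
  refine ⟨biprod.mapIso a a', biprod.mapIso b b', biprod.mapIso z z', ?_, ?_⟩
  · ext <;> simp [h1, h1']
  · ext <;> simp [h2, h2']

lemma PairIso.comm {A B Z : C} (i : A ⟶ B) (d : B ⟶ Z)
    {A₁ B₁ Z₁ : C} (i₁ : A₁ ⟶ B₁) (d₁ : B₁ ⟶ Z₁) :
    PairIso (biprod.map i i₁) (biprod.map d d₁) (biprod.map i₁ i) (biprod.map d₁ d) := by
  refine ⟨biprod.braiding _ _, biprod.braiding _ _, biprod.braiding _ _, ?_, ?_⟩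
  · ext <;> simp
  · ext <;> simp

lemma PairIso.assoc {A B Z : C} (i : A ⟶ B) (d : B ⟶ Z)
    {A₁ B₁ Z₁ : C} (i₁ : A₁ ⟶ B₁) (d₁ : B₁ ⟶ Z₁) {A₂ B₂ Z₂ : C} (i₂ : A₂ ⟶ B₂) (d₂ : B₂ ⟶ Z₂) :
    PairIso (biprod.map i (biprod.map i₁ i₂)) (biprod.map d (biprod.map d₁ d₂))
      (biprod.map (biprod.map i i₁) i₂) (biprod.map (biprod.map d d₁) d₂) := by
  refine ⟨(biprod.associator _ _ _).symm, (biprod.associator _ _ _).symm,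
    (biprod.associator _ _ _).symm, ?_, ?_⟩
  · ext <;> simp
  · ext <;> simp

/-! ### split pairs -/

def Spl {A B Z : C} (j : A ⟶ B) (e : B ⟶ Z) : Prop :=
  ∃ (r : B ⟶ A) (s : Z ⟶ B), j ≫ e = 0 ∧ j ≫ r = 𝟙 A ∧ s ≫ e = 𝟙 Z ∧ s ≫ r = 0 ∧
    r ≫ j + e ≫ s = 𝟙 B

lemma Spl.iso {A B Z A' B' Z' : C} {i : A ⟶ B} {d : B ⟶ Z} {i' : A' ⟶ B'} {d' : B' ⟶ Z'}
    (hs : Spl i d) (h : PairIso i d i' d') : Spl i' d' := by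
  obtain ⟨a, b, z, h1, h2⟩ := h
  obtain ⟨r, s, h3, h4, h5, h6, h7⟩ := hs
  have e1 : i' = a.inv ≫ i ≫ b.hom := by simp [h1]
  have e2 : d' = b.inv ≫ d ≫ z.hom := by simp [h2]
  subst e1 e2
  refine ⟨b.inv ≫ r ≫ a.hom, z.inv ≫ s ≫ b.hom, ?_, ?_, ?_, ?_, ?_⟩
  · simp [reassoc_of% h3]
  · simp [reassoc_of% h4]
  · simp [reassoc_of% h5]
  · simp [reassoc_of% h6]
  · have := congrArg (fun t => b.inv ≫ t ≫ b.hom) h7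
    simpa using this

lemma Spl.std (X Y : C) : Spl (biprod.inl : X ⟶ X ⊞ Y) (biprod.snd : X ⊞ Y ⟶ Y) :=
  ⟨biprod.fst, biprod.inr, by simp, by simp, by simp, by simp, by simp [biprod.total]⟩

lemma spl_iff {A B Z : C} {j : A ⟶ B} {e : B ⟶ Z} : Spl j e ↔ IsSplitPair j e := by
  constructor
  · rintro ⟨r, s, h3, h4, h5, h6, h7⟩
    refine ⟨A, Z, Iso.refl _, ⟨biprod.desc j s, biprod.lift r e, ?_, ?_⟩, Iso.refl _, ?_, ?_⟩
    · ext <;> simp [h3, h4, h5, h6]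
    · simpa using h7
    · simp
    · ext <;> simp [h3, h5]
  · rintro ⟨X, Y, h⟩
    exact (Spl.std X Y).iso h

lemma Spl.sum {A B Z A' B' Z' : C} {i : A ⟶ B} {d : B ⟶ Z} {i' : A' ⟶ B'} {d' : B' ⟶ Z'}
    (hs : Spl i d) (hs' : Spl i' d') : Spl (biprod.map i i') (biprod.map d d') := by
  obtain ⟨r, s, h3, h4, h5, h6, h7⟩ := hs
  obtain ⟨r', s', h3', h4', h5', h6', h7'⟩ := hs'
  refine ⟨biprod.map r r', biprod.map s s', ?_, ?_, ?_, ?_, ?_⟩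
  · ext <;> simp [h3, h3']
  · ext <;> simp [h4, h4']
  · ext <;> simp [h5, h5']
  · ext <;> simp [h6, h6']
  · ext
    · simpa using h7
    · simp
    · simp
    · simpa using h7'

lemma Spl.kc {A B Z : C} {i : A ⟶ B} {d : B ⟶ Z} (hs : Spl i d) : IsKernelCokernelPair i d := by
  obtain ⟨r, s, h3, h4, h5, h6, h7⟩ := hs
  rw [kc_iff]
  refine ⟨h3, ?_, ?_, ?_, ?_⟩
  · intro W x hx
    have := congrArg (· ≫ r) hx
    simpa [h4] using this
  · intro W x hx
    have := congrArg (s ≫ ·) hx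
    simpa [reassoc_of% h5] using this
  · intro W x hx
    refine ⟨x ≫ r, ?_⟩
    have := congrArg (x ≫ ·) h7
    simpa [reassoc_of% hx] using this
  · intro W x hx
    refine ⟨s ≫ x, ?_⟩
    have := congrArg (· ≫ x) h7
    simpa [hx] using this

lemma kc_iso {A B Z A' B' Z' : C} {i : A ⟶ B} {d : B ⟶ Z} {i' : A' ⟶ B'} {d' : B' ⟶ Z'}
    (hs : IsKernelCokernelPair i d) (h : PairIso i d i' d') : IsKernelCokernelPair i' d' := by
  obtain ⟨a, b, z, h1, h2⟩ := h
  have e1 : i' = a.inv ≫ i ≫ b.hom := by simp [h1]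
  have e2 : d' = b.inv ≫ d ≫ z.hom := by simp [h2]
  subst e1 e2
  rw [kc_iff] at hs ⊢
  obtain ⟨k1, k2, k3, k4, k5⟩ := hs
  refine ⟨by simp [reassoc_of% k1], ?_, ?_, ?_, ?_⟩
  · intro W x hx
    have := k2 (x ≫ a.inv) (by
      have := congrArg (· ≫ b.inv) hx
      simpa using this)
    have := congrArg (· ≫ a.hom) this
    simpa using this
  · intro W x hx
    have := k3 (z.hom ≫ x) (by
      have := congrArg (b.hom ≫ ·) hx
      simpa using this)
    have := congrArg (z.inv ≫ ·) this
    simpa using this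
  · intro W x hx
    obtain ⟨y, hy⟩ := k4 (x ≫ b.inv) (by
      have := congrArg (· ≫ z.inv) hx
      simpa using this)
    refine ⟨y ≫ a.hom, ?_⟩
    simp [reassoc_of% hy]
  · intro W x hx
    obtain ⟨y, hy⟩ := k5 (b.hom ≫ x) (by
      have := congrArg (a.hom ≫ ·) hx
      simpa using this)
    refine ⟨z.inv ≫ y, ?_⟩
    simp [hy]

lemma kc_sum {A B Z A' B' Z' : C} {i : A ⟶ B} {d : B ⟶ Z} {i' : A' ⟶ B'} {d' : B' ⟶ Z'}
    (hs : IsKernelCokernelPair i d) (hs' : IsKernelCokernelPair i' d') :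
    IsKernelCokernelPair (biprod.map i i') (biprod.map d d') := by
  rw [kc_iff] at hs hs' ⊢
  obtain ⟨k1, k2, k3, k4, k5⟩ := hs
  obtain ⟨k1', k2', k3', k4', k5'⟩ := hs'
  refine ⟨by ext <;> simp [k1, k1'], ?_, ?_, ?_, ?_⟩
  · intro W x hx
    ext
    · have := congrArg (· ≫ biprod.fst) hx
      simpa using k2 (x ≫ biprod.fst) (by simpa using this)
    · have := congrArg (· ≫ biprod.snd) hx
      simpa using k2' (x ≫ biprod.snd) (by simpa using this)
  · intro W x hx
    ext
    · have := congrArg (biprod.inl ≫ ·) hx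
      simpa using k3 (biprod.inl ≫ x) (by simpa using this)
    · have := congrArg (biprod.inr ≫ ·) hx
      simpa using k3' (biprod.inr ≫ x) (by simpa using this)
  · intro W x hx
    obtain ⟨y, hy⟩ := k4 (x ≫ biprod.fst) (by
      have := congrArg (· ≫ biprod.fst) hx
      simpa using this)
    obtain ⟨y', hy'⟩ := k4' (x ≫ biprod.snd) (by
      have := congrArg (· ≫ biprod.snd) hx
      simpa using this)
    exact ⟨biprod.lift y y', by ext <;> simp [hy, hy']⟩
  · intro W x hx
    obtain ⟨y, hy⟩ := k5 (biprod.inl ≫ x) (by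
      have := congrArg (biprod.inl ≫ ·) hx
      simpa using this)
    obtain ⟨y', hy'⟩ := k5' (biprod.inr ≫ x) (by
      have := congrArg (biprod.inr ≫ ·) hx
      simpa using this)
    exact ⟨biprod.desc y y', by ext <;> simp [hy, hy']⟩

lemma spl_of_splitMono {A B Z : C} {i : A ⟶ B} {d : B ⟶ Z} (hk : IsKernelCokernelPair i d)
    {r : B ⟶ A} (hr : i ≫ r = 𝟙 A) : Spl i d := by
  obtain ⟨k1, k2, k3, k4, k5⟩ := kc_iff.1 hk
  obtain ⟨s, hs⟩ := k5 (𝟙 B - r ≫ i) (by simp [reassoc_of% hr])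
  have h5 : s ≫ d = 𝟙 Z := by
    refine sub_eq_zero.1 (k3 _ ?_)
    simp [reassoc_of% hs, k1]
  refine ⟨r, s, k1, hr, h5, ?_, by simp [hs]⟩
  apply k3
  simp [reassoc_of% hs, hr]

lemma spl_of_splitEpi {A B Z : C} {i : A ⟶ B} {d : B ⟶ Z} (hk : IsKernelCokernelPair i d)
    {s : Z ⟶ B} (hs : s ≫ d = 𝟙 Z) : Spl i d := by
  obtain ⟨k1, k2, k3, k4, k5⟩ := kc_iff.1 hk
  obtain ⟨r, hr⟩ := k4 (𝟙 B - d ≫ s) (by simp [hs])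
  have h5 : i ≫ r = 𝟙 A := by
    refine sub_eq_zero.1 (k2 _ ?_)
    simp [hr, reassoc_of% k1]
  refine ⟨r, s, k1, h5, hs, ?_, by simp [hr]⟩
  apply k2
  simp [hr, reassoc_of% hs]

/-! ### the class generated by the sequence -/

inductive EB {A B Z : C} (i : A ⟶ B) (d : B ⟶ Z) :
    ∀ {A' B' Z' : C}, (A' ⟶ B') → (B' ⟶ Z') → Prop
  | base {A' B' Z' : C} {j : A' ⟶ B'} {e : B' ⟶ Z'} (h : Spl j e) : EB i d j e
  | step {A' B' Z' A₂ B₂ Z₂ : C} {j : A' ⟶ B'} {e : B' ⟶ Z'} {j₂ : A₂ ⟶ B₂} {e₂ : B₂ ⟶ Z₂}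
      (h : EB i d j e) (h' : PairIso (biprod.map i j) (biprod.map d e) j₂ e₂) : EB i d j₂ e₂

section EBlemmas
variable {A B Z : C} {i : A ⟶ B} {d : B ⟶ Z}

lemma EB.iso {A' B' Z' A₂ B₂ Z₂ : C} {j : A' ⟶ B'} {e : B' ⟶ Z'} {j₂ : A₂ ⟶ B₂} {e₂ : B₂ ⟶ Z₂}
    (h : EB i d j e) (h' : PairIso j e j₂ e₂) : EB i d j₂ e₂ := by
  cases h with
  | base h => exact .base (h.iso h')
  | step h k => exact .step h (k.trans' h')

lemma EB.sum_spl {A' B' Z' A₂ B₂ Z₂ : C} {j : A' ⟶ B'} {e : B' ⟶ Z'} {j₂ : A₂ ⟶ B₂}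
    {e₂ : B₂ ⟶ Z₂} (h : EB i d j e) (h' : Spl j₂ e₂) :
    EB i d (biprod.map j j₂) (biprod.map e e₂) := by
  induction h with
  | base h => exact .base (h.sum h')
  | step h k ih => exact .step ih ((PairIso.assoc _ _ _ _ _ _).trans' (k.sum (PairIso.rfl' _ _)))

lemma EB.sum {A' B' Z' A₂ B₂ Z₂ : C} {j : A' ⟶ B'} {e : B' ⟶ Z'} {j₂ : A₂ ⟶ B₂}
    {e₂ : B₂ ⟶ Z₂} (h : EB i d j e) (h' : EB i d j₂ e₂) :
    EB i d (biprod.map j j₂) (biprod.map e e₂) := by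
  induction h with
  | base h => exact (h'.sum_spl h).iso (PairIso.comm _ _ _ _)
  | step h k ih => exact .step ih ((PairIso.assoc _ _ _ _ _ _).trans' (k.sum (PairIso.rfl' _ _)))

lemma EB.kc (hk : IsKernelCokernelPair i d) {A' B' Z' : C} {j : A' ⟶ B'} {e : B' ⟶ Z'}
    (h : EB i d j e) : IsKernelCokernelPair j e := by
  induction h with
  | base h => exact h.kc
  | step h k ih => exact kc_iso (kc_sum hk ih) k

end EBlemmas

/-! ### finite biproducts over `Fin` -/

noncomputable def finIso {n : ℕ} (f : Fin (n + 1) → C) :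
    (⨁ f) ≅ f 0 ⊞ (⨁ fun j : Fin n => f j.succ) where
  hom := biprod.lift (biproduct.π f 0) (biproduct.lift fun j => biproduct.π f j.succ)
  inv := biprod.desc (biproduct.ι f 0) (biproduct.desc fun j => biproduct.ι f j.succ)
  hom_inv_id := by
    rw [biprod.lift_desc, biproduct.lift_desc, ← biproduct.total, Fin.sum_univ_succ]
  inv_hom_id := by
    ext a b
    · simp
    · simp [biproduct.ι_π_ne _ (Fin.succ_ne_zero _).symm]
    · simp [biproduct.ι_π_ne _ (Fin.succ_ne_zero _)]
    · rename_i a b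
      by_cases h : a = b
      · subst h
        simp
      · simp [biproduct.ι_π_ne _ h, biproduct.ι_π_ne _ (fun h' => h (Fin.succ_injective _ h'))]

lemma isZero_fin0 (f : Fin 0 → C) : IsZero (⨁ f) := by
  rw [IsZero.iff_id_eq_zero]
  ext j
  exact j.elim0

lemma pairIso_fin {A B Z : C} (i : A ⟶ B) (d : B ⟶ Z) (n : ℕ) :
    PairIso (biproduct.map (fun _ : Fin (n+1) => i)) (biproduct.map (fun _ : Fin (n+1) => d))
      (biprod.map i (biproduct.map (fun _ : Fin n => i)))
      (biprod.map d (biproduct.map (fun _ : Fin n => d))) := by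
  refine ⟨finIso _, finIso _, finIso _, ?_, ?_⟩
  · apply biprod.hom_ext
    · simp [finIso]
    · apply biproduct.hom_ext
      intro j
      simp [finIso]
  · apply biprod.hom_ext
    · simp [finIso]
    · apply biproduct.hom_ext
      intro j
      simp [finIso]

lemma spl_zero {A B Z : C} (i : A ⟶ B) (d : B ⟶ Z) (hA : IsZero A) (hB : IsZero B)
    (hZ : IsZero Z) : Spl i d :=
  ⟨0, 0, hA.eq_of_src _ _, hA.eq_of_src _ _, hZ.eq_of_src _ _, hZ.eq_of_src _ _, hB.eq_of_src _ _⟩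

lemma spl_pairIso {A B Z A' B' Z' : C} {i : A ⟶ B} {d : B ⟶ Z} (h : Spl i d) {i' : A' ⟶ B'}
    {d' : B' ⟶ Z'} (h' : Spl i' d') (a : A ≅ A') (z : Z ≅ Z') : PairIso i d i' d' := by
  obtain ⟨r, s, h3, h4, h5, h6, h7⟩ := h
  obtain ⟨r', s', h3', h4', h5', h6', h7'⟩ := h'
  refine ⟨a, ⟨r ≫ a.hom ≫ i' + d ≫ z.hom ≫ s', r' ≫ a.inv ≫ i + d' ≫ z.inv ≫ s, ?_, ?_⟩, z, ?_, ?_⟩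
  · simp [reassoc_of% h3', reassoc_of% h4', reassoc_of% h5', reassoc_of% h6', h7]
  · simp [reassoc_of% h3, reassoc_of% h4, reassoc_of% h5, reassoc_of% h6, h7']
  · simp [reassoc_of% h3, reassoc_of% h4]
  · simp [h3', h5']

lemma eb_copies {A B Z : C} (i : A ⟶ B) (d : B ⟶ Z) (n : ℕ) :
    EB i d (biproduct.map (fun _ : Fin n => i)) (biproduct.map (fun _ : Fin n => d)) := by
  induction n with
  | zero => exact .base (spl_zero _ _ (isZero_fin0 _) (isZero_fin0 _) (isZero_fin0 _))
  | succ n ih => exact .step ih (pairIso_fin i d n).symm'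

lemma eb_iff {A B Z : C} {i : A ⟶ B} {d : B ⟶ Z} {A' B' Z' : C} {j : A' ⟶ B'} {e : B' ⟶ Z'} :
    EB i d j e ↔ InEAlpha i d j e := by
  constructor
  · intro h
    induction h with
    | @base A' B' Z' j e h =>
      refine ⟨A', Z', 0, ?_⟩
      have hz : Spl (biproduct.map (fun _ : Fin 0 => i)) (biproduct.map (fun _ : Fin 0 => d)) :=
        spl_zero _ _ (isZero_fin0 _) (isZero_fin0 _) (isZero_fin0 _)
      refine spl_pairIso ((Spl.std _ _).sum hz) h ?_ ?_
      · exact ⟨biprod.fst, biprod.inl, fst_inl_of_zero (isZero_fin0 _), by simp⟩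
      · exact ⟨biprod.fst, biprod.inl, fst_inl_of_zero (isZero_fin0 _), by simp⟩
    | step h k ih =>
      obtain ⟨X, Y, n, hn⟩ := ih
      refine ⟨X, Y, n + 1, ?_⟩
      refine PairIso.trans' ?_ (((PairIso.rfl' i d).sum hn).trans' k)
      refine ((PairIso.rfl' _ _).sum (pairIso_fin i d n)).trans' ?_
      refine (PairIso.assoc _ _ _ _ _ _).trans' ?_
      refine PairIso.trans' ?_ (PairIso.assoc _ _ _ _ _ _).symm'
      exact (PairIso.comm _ _ _ _).sum (PairIso.rfl' _ _)
  · rintro ⟨X, Y, n, h⟩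
    exact (EB.sum (.base (Spl.std X Y)) (eb_copies i d n)).iso h

/-! ### complements -/

/-- Every split mono with a given retraction from `L` to `X` has a complement. -/
def Compl (L X : C) : Prop := ∀ (t : L ⟶ X) (r : X ⟶ L), t ≫ r = 𝟙 L →
  ∃ (Y : C) (e : X ≅ L ⊞ Y), t ≫ e.hom = biprod.inl ∧ e.inv ≫ r = biprod.fst

/-- shear automorphism -/
noncomputable def shear {X Y : C} (u : X ⟶ Y) : X ⊞ Y ≅ X ⊞ Y where
  hom := biprod.lift biprod.fst (biprod.snd + biprod.fst ≫ u)
  inv := biprod.lift biprod.fst (biprod.snd - biprod.fst ≫ u)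
  hom_inv_id := by ext <;> simp
  inv_hom_id := by ext <;> simp

noncomputable def shear' {X Y : C} (u : Y ⟶ X) : X ⊞ Y ≅ X ⊞ Y where
  hom := biprod.lift (biprod.fst + biprod.snd ≫ u) biprod.snd
  inv := biprod.lift (biprod.fst - biprod.snd ≫ u) biprod.snd
  hom_inv_id := by ext <;> simp
  inv_hom_id := by ext <;> simp

lemma compl_of_weak {L X : C} (h : ∀ (t : L ⟶ X) (r : X ⟶ L), t ≫ r = 𝟙 L →
    ∃ (Y : C) (e : X ≅ L ⊞ Y), t ≫ e.hom = biprod.inl) : Compl L X := by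
  intro t r htr
  obtain ⟨Y, e, he⟩ := h t r htr
  have ht : t = biprod.inl ≫ e.inv := by rw [← he]; simp
  refine ⟨Y, e ≪≫ shear' (biprod.inr ≫ e.inv ≫ r), ?_, ?_⟩
  · rw [Iso.trans_hom, reassoc_of% he]
    ext <;> simp [shear']
  · rw [ht, Category.assoc] at htr
    rw [Iso.trans_inv, Category.assoc]
    apply biprod.hom_ext'
    · have : biprod.inl ≫ (shear' (biprod.inr ≫ e.inv ≫ r)).inv = biprod.inl := by
        ext <;> simp [shear']
      rw [reassoc_of% this, htr, biprod.inl_fst]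
    · have : biprod.inr ≫ (shear' (biprod.inr ≫ e.inv ≫ r)).inv =
        -(biprod.inr ≫ e.inv ≫ r) ≫ biprod.inl + biprod.inr := by
        ext <;> simp [shear']
      rw [reassoc_of% this]
      simp only [Preadditive.add_comp, Preadditive.neg_comp, Category.assoc, htr]
      simp

lemma Compl.of_iso {L X X' : C} (h : Compl L X) (a : X ≅ X') : Compl L X' := by
  intro t r htr
  obtain ⟨Y, e, h1, h2⟩ := h (t ≫ a.inv) (a.hom ≫ r) (by simpa using htr)
  exact ⟨Y, a.symm ≪≫ e, by simpa using h1, by simpa using h2⟩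

lemma Compl.of_iso' {L L' X : C} (h : Compl L X) (a : L ≅ L') : Compl L' X := by
  intro t r htr
  obtain ⟨Y, e, h1, h2⟩ := h (a.hom ≫ t) (r ≫ a.inv) (by simp [reassoc_of% htr])
  refine ⟨Y, e ≪≫ biprod.mapIso a (Iso.refl _), ?_, ?_⟩
  · simp only [Category.assoc] at h1
    have h1' := (Iso.eq_inv_comp a).2 h1
    rw [Iso.trans_hom, reassoc_of% h1']
    ext <;> simp
  · have h2' : e.inv ≫ r = biprod.fst ≫ a.hom := by
      rw [← h2]; simp
    simp only [Iso.trans_inv, Category.assoc, h2']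
    ext <;> simp

lemma compl_local {L F : C} (hL : IsLocalRing (End L)) (hF : IsLocalRing (End F)) :
    Compl L F := by
  apply compl_of_weak
  intro t r htr
  have key : r ≫ t = 𝟙 F := by
    let a : End F := End.of (r ≫ t)
    have ha : a * a = a := by
      change (r ≫ t) ≫ (r ≫ t) = r ≫ t
      simp [reassoc_of% htr]
    rcases IsLocalRing.isUnit_or_isUnit_of_add_one (add_sub_cancel a (1 : End F)) with h | h
    · have : a = 1 := by
        have := h.mul_left_cancel (b := a) (c := 1) (by rw [ha, mul_one])
        exact this
      exact this
    · exfalso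
      have h0 : a = 0 := by
        have := h.mul_left_cancel (b := a) (c := 0) (by rw [sub_mul, ha]; simp)
        exact this
      have h0' : r ≫ t = 0 := h0
      have : (1 : End L) = 0 := by
        change 𝟙 L = 0
        have h2 : t ≫ (r ≫ t) ≫ r = 𝟙 L := by simp [htr]
        rw [← h2, h0']; simp
      exact one_ne_zero this
  refine ⟨0, ⟨r ≫ biprod.inl, biprod.fst ≫ t, by simp [key], ?_⟩, ?_⟩
  · apply biprod.hom_ext'
    · simp [reassoc_of% htr]
    · exact (isZero_zero C).eq_of_src _ _
  · simp [reassoc_of% htr]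

lemma compl_sum_left {L X Y : C} (hX : Compl L X) (t : L ⟶ X ⊞ Y) (r : X ⊞ Y ⟶ L)
    (h : IsUnit (End.of ((t ≫ biprod.fst) ≫ (biprod.inl ≫ r)))) :
    ∃ (Y' : C) (e : X ⊞ Y ≅ L ⊞ Y'), t ≫ e.hom = biprod.inl := by
  obtain ⟨u, hu⟩ := h
  have h1 : ((t ≫ biprod.fst) ≫ (biprod.inl ≫ r)) ≫ (End.asHom (↑u⁻¹ : End L)) = 𝟙 L := by
    have := u.inv_mul
    rw [hu] at this
    exact this
  obtain ⟨Y', e, h2, -⟩ := hX (t ≫ biprod.fst) ((biprod.inl ≫ r) ≫ (End.asHom (↑u⁻¹ : End L)))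
    (by simpa using h1)
  refine ⟨Y' ⊞ Y, (biprod.mapIso e (Iso.refl Y) ≪≫ biprod.associator _ _ _) ≪≫
    shear (biprod.lift 0 (-(t ≫ biprod.snd))), ?_⟩
  have h3 : t ≫ biprod.fst ≫ e.hom ≫ biprod.fst = 𝟙 L := by
    have := congrArg (· ≫ biprod.fst) h2
    simpa using this
  have h4 : t ≫ biprod.fst ≫ e.hom ≫ biprod.snd = 0 := by
    have := congrArg (· ≫ biprod.snd) h2
    simpa using this
  ext <;> simp [shear, h3, h4, reassoc_of% h3]

lemma compl_sum {L X Y : C} (hL : IsLocalRing (End L)) (hX : Compl L X) (hY : Compl L Y) :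
    Compl L (X ⊞ Y) := by
  apply compl_of_weak
  intro t r htr
  have hsum : End.of ((t ≫ biprod.fst) ≫ (biprod.inl ≫ r)) +
      End.of ((t ≫ biprod.snd) ≫ (biprod.inr ≫ r)) = 1 := by
    change ((t ≫ biprod.fst) ≫ (biprod.inl ≫ r)) + ((t ≫ biprod.snd) ≫ (biprod.inr ≫ r)) = 𝟙 L
    rw [← htr]
    have := congrArg (fun z => t ≫ z ≫ r) (biprod.total (X := X) (Y := Y))
    simp only [Preadditive.add_comp, Preadditive.comp_add, Category.assoc, Category.id_comp] at this
    simpa only [Category.assoc] using this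
  rcases IsLocalRing.isUnit_or_isUnit_of_add_one hsum with h | h
  · exact compl_sum_left hX t r h
  · obtain ⟨Y', e, he⟩ := compl_sum_left (Y := X) hY (t ≫ (biprod.braiding X Y).hom)
      ((biprod.braiding X Y).inv ≫ r) (by
        have e1 : (t ≫ (biprod.braiding X Y).hom) ≫ biprod.fst = t ≫ biprod.snd := by simp
        have e2 : biprod.inl ≫ (biprod.braiding X Y).inv ≫ r = biprod.inr ≫ r := by
          rw [← Category.assoc]
          congr 1
          ext <;> simp
        rw [e1, e2]
        exact h)
    exact ⟨Y', biprod.braiding X Y ≪≫ e, by simpa using he⟩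

lemma compl_fin {L : C} (hL : IsLocalRing (End L)) (n : ℕ) (f : Fin n → C)
    (hf : ∀ j, IsLocalRing (End (f j))) : Compl L (⨁ f) := by
  induction n with
  | zero =>
    intro t r htr
    exfalso
    have : t = 0 := (isZero_fin0 f).eq_of_tgt _ _
    rw [this, zero_comp] at htr
    exact one_ne_zero (α := End L) htr.symm
  | succ n ih =>
    exact (compl_sum hL (compl_local hL (hf 0)) (ih _ (fun j => hf _))).of_iso (finIso f).symm

lemma compl_of_KS (hKS : ∀ X : C, ∃ (n : ℕ) (f : Fin n → C),
      (∀ j, IsLocalRing (End (f j))) ∧ Nonempty (X ≅ ⨁ f)) {A : C} (hA : Indecomposable' A)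
    (X : C) : Compl A X := by
  obtain ⟨n, f, hf, ⟨a⟩⟩ := hKS A
  obtain ⟨m, g, hg, ⟨b⟩⟩ := hKS X
  cases n with
  | zero => exact absurd ((isZero_fin0 f).of_iso a) hA.1
  | succ n =>
    have hz : IsZero (⨁ fun j : Fin n => f j.succ) := by
      rcases hA.2 _ _ ⟨a ≪≫ finIso f⟩ with h | h
      · exfalso
        have := hf 0
        exact one_ne_zero (α := End (f 0)) ((IsZero.iff_id_eq_zero _).1 h)
      · exact h
    have c : f 0 ≅ A := ⟨biprod.inl, biprod.fst, by simp, fst_inl_of_zero hz⟩ ≪≫ (a ≪≫ finIso f).symm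
    exact ((compl_fin (hf 0) m g hg).of_iso b.symm).of_iso' c

lemma endo_split {A : C} (hA : Indecomposable' A) (hc : Compl A A) {t r : A ⟶ A}
    (h : t ≫ r = 𝟙 A) : r ≫ t = 𝟙 A := by
  obtain ⟨Y, e, h1, h2⟩ := hc t r h
  have hY : IsZero Y := (hA.2 _ _ ⟨e⟩).resolve_left hA.1
  have ht : t = biprod.inl ≫ e.inv := by rw [← h1]; simp
  have hr : r = e.hom ≫ biprod.fst := by rw [← h2]; simp
  have : biprod.fst ≫ biprod.inl = 𝟙 (A ⊞ Y) := by
    ext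
    · simp
    · simp
    · exact hY.eq_of_src _ _
    · exact hY.eq_of_src _ _
  rw [ht, hr]
  simp [reassoc_of% this]

/-! ### pushouts and pullbacks -/

section PO
variable {A B Z : C} {i : A ⟶ B} {d : B ⟶ Z}

lemma EB.lift_left (h0 : ∀ u : A ⟶ A, ∃ w : B ⟶ B, i ≫ w = u ≫ i)
    {T V E : C} {j : T ⟶ V} {e : V ⟶ E} (h : EB i d j e) :
    ∀ u : T ⟶ A, ∃ w : V ⟶ B, j ≫ w = u ≫ i := by
  induction h with
  | base h =>
    intro u
    obtain ⟨r, s, h3, h4, h5, h6, h7⟩ := h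
    exact ⟨r ≫ u ≫ i, by simp [reassoc_of% h4]⟩
  | step h k ih =>
    intro u
    obtain ⟨a, b, z, h1, h2⟩ := k
    obtain ⟨w1, hw1⟩ := h0 (biprod.inl ≫ a.hom ≫ u)
    obtain ⟨w2, hw2⟩ := ih (biprod.inr ≫ a.hom ≫ u)
    refine ⟨b.inv ≫ biprod.desc w1 w2, ?_⟩
    have h1' := (Iso.eq_inv_comp a).2 h1.symm
    rw [h1']
    simp only [Category.assoc, Iso.hom_inv_id_assoc]
    rw [Iso.inv_comp_eq]
    ext
    · simpa using hw1
    · simpa using hw2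

lemma EB.lift_right (h0 : ∀ u : Z ⟶ Z, ∃ w : B ⟶ B, w ≫ d = d ≫ u)
    {T V E : C} {j : T ⟶ V} {e : V ⟶ E} (h : EB i d j e) :
    ∀ u : Z ⟶ E, ∃ w : B ⟶ V, w ≫ e = d ≫ u := by
  induction h with
  | base h =>
    intro u
    obtain ⟨r, s, h3, h4, h5, h6, h7⟩ := h
    exact ⟨d ≫ u ≫ s, by simp [h5]⟩
  | step h k ih =>
    intro u
    obtain ⟨a, b, z, h1, h2⟩ := k
    obtain ⟨w1, hw1⟩ := h0 (u ≫ z.inv ≫ biprod.fst)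
    obtain ⟨w2, hw2⟩ := ih (u ≫ z.inv ≫ biprod.snd)
    refine ⟨biprod.lift w1 w2 ≫ b.hom, ?_⟩
    rw [Category.assoc, ← h2, ← Category.assoc, ← Iso.eq_comp_inv]
    ext
    · simpa using hw1
    · simpa using hw2

lemma eb_pushout (hk : IsKernelCokernelPair i d)
    (h0 : ∀ u : A ⟶ A, ∃ w : B ⟶ B, i ≫ w = u ≫ i)
    (hl : ∀ {X : C} (f : A ⟶ X), ¬ (∃ r : X ⟶ A, f ≫ r = 𝟙 A) → ∃ h : B ⟶ X, i ≫ h = f)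
    (hc : ∀ X : C, Compl A X)
    {T V E : C} {j : T ⟶ V} {e : V ⟶ E} (h : EB i d j e) :
    ∀ {A' : C} (t : T ⟶ A'), ∃ (S : C) (g : V ⟶ S) (i' : A' ⟶ S), IsPushout j t g i' ∧
      ∃ (Z' : C) (d' : S ⟶ Z'), EB i d i' d' := by
  induction h with
  | @base T V E j e h =>
    intro A' t
    obtain ⟨r, s, h3, h4, h5, h6, h7⟩ := h
    refine ⟨A' ⊞ E, biprod.lift (r ≫ t) e, biprod.inl, mk_pushout ?_ ?_ ?_, E, biprod.snd,
      .base (Spl.std _ _)⟩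
    · ext <;> simp [h3, reassoc_of% h4]
    · intro W x y hxy
      refine ⟨biprod.desc y (s ≫ x), ?_, by simp⟩
      have := congrArg (· ≫ x) h7
      simpa [hxy] using this
    · intro W z hz1 hz2
      ext
      · simpa using hz2
      · have := congrArg (s ≫ ·) hz1
        have e1 : s ≫ biprod.lift (r ≫ t) e = biprod.inr := by
          ext <;> simp [h5, reassoc_of% h6]
        simpa [reassoc_of% e1] using this
  | @step T V E T₂ V₂ E₂ j e j₂ e₂ hj k ih =>
    intro A' t₂
    obtain ⟨k1, k2, k3, k4, k5⟩ := kc_iff.1 hk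
    obtain ⟨a, b, z, q1, q2⟩ := k
    -- reduce to the direct sum
    suffices H : ∀ t : A ⊞ T ⟶ A', ∃ (S : C) (g : B ⊞ V ⟶ S) (i' : A' ⟶ S),
        IsPushout (biprod.map i j) t g i' ∧ ∃ (Z' : C) (d' : S ⟶ Z'), EB i d i' d' by
      obtain ⟨S, g, i', hp, Z', d', hE⟩ := H (a.hom ≫ t₂)
      refine ⟨S, b.inv ≫ g, i', ?_, Z', d', hE⟩
      exact hp.of_iso a b (Iso.refl _) (Iso.refl _) q1 (by simp) (by simp) (by simp)
    intro t
    by_cases hs : ∃ r : A' ⟶ A, (biprod.inl ≫ t) ≫ r = 𝟙 A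
    · obtain ⟨r, hr⟩ := hs
      obtain ⟨A'', f, hf, -⟩ := hc A' _ r hr
      obtain ⟨w, hw⟩ := hj.lift_left h0 (biprod.inr ≫ t ≫ f.hom ≫ biprod.fst)
      obtain ⟨S, g, i', hp, Z', d', hE⟩ := ih (biprod.inr ≫ t ≫ f.hom ≫ biprod.snd)
      have hf1 : biprod.inl ≫ t ≫ f.hom ≫ biprod.fst = 𝟙 A := by
        have := congrArg (· ≫ biprod.fst) hf
        simpa using this
      have hf2 : biprod.inl ≫ t ≫ f.hom ≫ biprod.snd = 0 := by
        have := congrArg (· ≫ biprod.snd) hf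
        simpa using this
      have hpw := hp.w
      simp only [Category.assoc] at hpw hw
      refine ⟨B ⊞ S, biprod.desc biprod.inl (biprod.lift w g), f.hom ≫ biprod.map i i',
        mk_pushout ?_ ?_ ?_, Z ⊞ Z', biprod.map d d',
        .step hE ⟨f.symm, Iso.refl _, Iso.refl _, by simp, by simp⟩⟩
      · ext
        · simp [reassoc_of% hf1]
        · simp [reassoc_of% hf2]
        · simp [hw]
        · simp [hpw]
      · intro W x y hxy
        have hx1 : i ≫ biprod.inl ≫ x = biprod.inl ≫ f.inv ≫ y := by
          have := congrArg (biprod.inl ≫ ·) hxy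
          rw [← hf]
          simpa using this
        have hx2 : j ≫ biprod.inr ≫ x = biprod.inr ≫ t ≫ y := by
          have := congrArg (biprod.inr ≫ ·) hxy
          simpa using this
        have hy : y = f.hom ≫ biprod.fst ≫ biprod.inl ≫ f.inv ≫ y +
            f.hom ≫ biprod.snd ≫ biprod.inr ≫ f.inv ≫ y := by
          have := congrArg (fun m => f.hom ≫ m ≫ f.inv ≫ y) (biprod.total (X := A) (Y := A''))
          simp only [Preadditive.add_comp, Preadditive.comp_add, Category.assoc, Category.id_comp,
            Iso.hom_inv_id, Iso.hom_inv_id_assoc, Category.comp_id] at this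
          exact this.symm
        obtain ⟨z, hz1, hz2⟩ := hp.exists_desc (biprod.inr ≫ x - w ≫ biprod.inl ≫ x)
          (biprod.inr ≫ f.inv ≫ y) (by
            rw [Preadditive.comp_sub, hx2, reassoc_of% hw, hx1]
            conv_lhs => rw [hy]
            simp)
        refine ⟨biprod.desc (biprod.inl ≫ x) z, ?_, ?_⟩
        · ext
          · simp
          · simp [biprod.lift_desc, hz1]
        · rw [Category.assoc, ← Iso.eq_inv_comp]
          ext
          · simp [hx1]
          · simp [hz2]
      · intro W z hz1 hz2
        have e1 : biprod.inl ≫ z = 0 := by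
          have := congrArg (biprod.inl ≫ ·) hz1
          simpa using this
        ext
        · simpa using e1
        · rw [comp_zero]
          have hz : z = biprod.snd ≫ biprod.inr ≫ z := by
            ext <;> simp [e1]
          apply hp.hom_ext
          · have := congrArg (biprod.inr ≫ ·) hz1
            rw [hz] at this
            simpa using this
          · have := congrArg (fun m => biprod.inr ≫ f.inv ≫ m) hz2
            simpa using this
    · obtain ⟨h, hh⟩ := hl _ hs
      obtain ⟨S, g, i', hp, Z', d', hE⟩ := ih (biprod.inr ≫ t)
      have hpw := hp.w
      simp only [Category.assoc] at hpw
      refine ⟨S ⊞ Z, biprod.desc (biprod.lift (h ≫ i') d) (g ≫ biprod.inl), i' ≫ biprod.inl,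
        mk_pushout ?_ ?_ ?_, Z' ⊞ Z, biprod.map d' (𝟙 Z), ?_⟩
      · ext
        · simp [reassoc_of% hh]
        · simp [k1]
        · simp [hpw]
        · simp
      · intro W x y hxy
        have hx1 : i ≫ biprod.inl ≫ x = biprod.inl ≫ t ≫ y := by
          have := congrArg (biprod.inl ≫ ·) hxy
          simpa using this
        have hx2 : j ≫ biprod.inr ≫ x = (biprod.inr ≫ t) ≫ y := by
          have := congrArg (biprod.inr ≫ ·) hxy
          simpa using this
        obtain ⟨z, hz1, hz2⟩ := hp.exists_desc (biprod.inr ≫ x) y hx2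
        obtain ⟨c, hc⟩ := k5 (biprod.inl ≫ x - h ≫ y) (by
          simp [hx1, reassoc_of% hh])
        refine ⟨biprod.desc z c, ?_, ?_⟩
        · ext
          · simp [hz2, hc, biprod.lift_desc]
          · simp [hz1]
        · simp [hz2]
      · intro W z hz1 hz2
        have e1 : biprod.inl ≫ z = 0 := by
          apply hp.hom_ext
          · have := congrArg (biprod.inr ≫ ·) hz1
            simpa using this
          · simpa using hz2
        have hz : z = biprod.snd ≫ biprod.inr ≫ z := by
          ext <;> simp [e1]
        ext
        · simpa using e1
        · rw [comp_zero]
          apply k3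
          have := congrArg (biprod.inl ≫ ·) hz1
          rw [hz] at this
          simpa using this
      · have hsp : Spl (0 : (0 : C) ⟶ Z) (𝟙 Z) := ⟨0, 𝟙 Z, by simp, by
          exact (isZero_zero C).eq_of_src _ _, by simp, by simp, by simp⟩
        refine (hE.sum_spl hsp).iso ⟨⟨biprod.fst, biprod.inl, ?_, by simp⟩, Iso.refl _,
          Iso.refl _, ?_, by simp⟩
        · exact fst_inl_of_zero (isZero_zero C)
        · ext <;> simp

lemma eb_pullback (hk : IsKernelCokernelPair i d)
    (h0 : ∀ u : Z ⟶ Z, ∃ w : B ⟶ B, w ≫ d = d ≫ u)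
    (hl : ∀ {X : C} (f : X ⟶ Z), ¬ (∃ s : Z ⟶ X, s ≫ f = 𝟙 Z) → ∃ h : X ⟶ B, h ≫ d = f)
    (hc : ∀ X : C, Compl Z X)
    {T V E : C} {j : T ⟶ V} {e : V ⟶ E} (h : EB i d j e) :
    ∀ {D : C} (t : D ⟶ E), ∃ (P : C) (p : P ⟶ V) (q : P ⟶ D), IsPullback p q e t ∧
      ∃ (A'' : C) (i'' : A'' ⟶ P), EB i d i'' q := by
  induction h with
  | @base T V E j e h =>
    intro D t
    obtain ⟨r, s, h3, h4, h5, h6, h7⟩ := h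
    refine ⟨T ⊞ D, biprod.desc j (t ≫ s), biprod.snd, mk_pullback ?_ ?_ ?_, T, biprod.inl,
      .base (Spl.std _ _)⟩
    · ext <;> simp [h3, h5]
    · intro W x y hxy
      refine ⟨biprod.lift (x ≫ r) y, ?_, by simp⟩
      have := congrArg (x ≫ ·) h7
      simpa [reassoc_of% hxy, biprod.lift_desc] using this
    · intro W z hz1 hz2
      ext
      · have := congrArg (· ≫ r) hz1
        have e1 : biprod.desc j (t ≫ s) ≫ r = biprod.fst := by
          ext <;> simp [h4, h6]
        simpa [e1] using this
      · simpa using hz2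
  | @step T V E T₂ V₂ E₂ j e j₂ e₂ hj k ih =>
    intro D t₂
    obtain ⟨k1, k2, k3, k4, k5⟩ := kc_iff.1 hk
    obtain ⟨a, b, z, q1, q2⟩ := k
    -- reduce to the direct sum
    suffices H : ∀ t : D ⟶ Z ⊞ E, ∃ (P : C) (p : P ⟶ B ⊞ V) (q : P ⟶ D),
        IsPullback p q (biprod.map d e) t ∧ ∃ (A'' : C) (i'' : A'' ⟶ P), EB i d i'' q by
      obtain ⟨P, p, q, hp, A'', i'', hE⟩ := H (t₂ ≫ z.inv)
      refine ⟨P, p ≫ b.hom, q, ?_, A'', i'', hE⟩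
      exact hp.of_iso (Iso.refl _) b (Iso.refl _) z (by simp) (by simp) q2 (by simp)
    intro t
    by_cases hs : ∃ s : Z ⟶ D, s ≫ (t ≫ biprod.fst) = 𝟙 Z
    · obtain ⟨s, hs⟩ := hs
      obtain ⟨D'', f, -, hf⟩ := hc D s _ hs
      obtain ⟨w, hw⟩ := hj.lift_right h0 (biprod.inl ≫ f.inv ≫ t ≫ biprod.snd)
      obtain ⟨P, p, q, hp, A'', i'', hE⟩ := ih (biprod.inr ≫ f.inv ≫ t ≫ biprod.snd)
      have hf1 : biprod.inl ≫ f.inv ≫ t ≫ biprod.fst = 𝟙 Z := by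
        rw [hf]; simp
      have hf2 : biprod.inr ≫ f.inv ≫ t ≫ biprod.fst = 0 := by
        rw [hf]; simp
      have hpw := hp.w
      refine ⟨B ⊞ P, biprod.lift biprod.fst (biprod.desc w p), biprod.map d q ≫ f.inv,
        mk_pullback ?_ ?_ ?_, A ⊞ A'', biprod.map i i'',
        .step hE ⟨Iso.refl _, Iso.refl _, f.symm, by simp, by simp⟩⟩
      · ext
        · simp [hf1]
        · simp [hw]
        · simp [hf2]
        · simp [hpw]
      · intro W x y hxy
        have hx1 : x ≫ biprod.fst ≫ d = y ≫ f.hom ≫ biprod.fst := by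
          have := congrArg (· ≫ biprod.fst) hxy
          rw [← hf]
          simpa using this
        have hx2 : x ≫ biprod.snd ≫ e = y ≫ t ≫ biprod.snd := by
          have := congrArg (· ≫ biprod.snd) hxy
          simpa using this
        have hy : y = y ≫ f.hom ≫ biprod.fst ≫ biprod.inl ≫ f.inv +
            y ≫ f.hom ≫ biprod.snd ≫ biprod.inr ≫ f.inv := by
          have := congrArg (fun m => y ≫ f.hom ≫ m ≫ f.inv) (biprod.total (X := Z) (Y := D''))
          simp only [Preadditive.add_comp, Preadditive.comp_add, Category.assoc, Category.id_comp,
            Iso.hom_inv_id, Iso.hom_inv_id_assoc, Category.comp_id] at this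
          exact this.symm
        obtain ⟨z, hz1, hz2⟩ := hp.exists_lift (x ≫ biprod.snd - x ≫ biprod.fst ≫ w)
          (y ≫ f.hom ≫ biprod.snd) (by
            simp only [Preadditive.sub_comp, Category.assoc]
            rw [hx2, hw, reassoc_of% hx1]
            conv_lhs => rw [hy]
            simp)
        refine ⟨biprod.lift (x ≫ biprod.fst) z, ?_, ?_⟩
        · ext
          · simp
          · simp [biprod.lift_desc, hz1]
        · rw [← Category.assoc, Iso.comp_inv_eq]
          ext
          · simp [hx1]
          · simp [hz2]
      · intro W z hz1 hz2
        have e1 : z ≫ biprod.fst = 0 := by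
          have := congrArg (· ≫ biprod.fst) hz1
          simpa using this
        ext
        · simpa using e1
        · rw [zero_comp]
          have hz : z = (z ≫ biprod.snd) ≫ biprod.inr := by
            ext <;> simp [e1]
          apply hp.hom_ext
          · have := congrArg (· ≫ biprod.snd) hz1
            rw [hz] at this
            simpa using this
          · have := congrArg (fun m => m ≫ f.hom ≫ biprod.snd) hz2
            simpa using this
    · obtain ⟨h, hh⟩ := hl _ hs
      obtain ⟨P, p, q, hp, A'', i'', hE⟩ := ih (t ≫ biprod.snd)
      have hpw := hp.w
      refine ⟨P ⊞ A, biprod.lift (biprod.desc (q ≫ h) i) (biprod.fst ≫ p), biprod.fst ≫ q,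
        mk_pullback ?_ ?_ ?_, A'' ⊞ A, biprod.map i'' (𝟙 A), ?_⟩
      · ext
        · simp [hh]
        · simp [hpw]
        · simp [k1]
        · simp
      · intro W x y hxy
        have hx1 : x ≫ biprod.fst ≫ d = y ≫ t ≫ biprod.fst := by
          have := congrArg (· ≫ biprod.fst) hxy
          simpa using this
        have hx2 : (x ≫ biprod.snd) ≫ e = y ≫ t ≫ biprod.snd := by
          have := congrArg (· ≫ biprod.snd) hxy
          simpa using this
        obtain ⟨z, hz1, hz2⟩ := hp.exists_lift (x ≫ biprod.snd) y hx2
        obtain ⟨c, hc⟩ := k4 (x ≫ biprod.fst - y ≫ h) (by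
          simp [hx1, hh])
        refine ⟨biprod.lift z c, ?_, ?_⟩
        · ext
          · simp [reassoc_of% hz2, hc, biprod.lift_desc]
          · simp [hz1]
        · simp [hz2]
      · intro W z hz1 hz2
        have e1 : z ≫ biprod.fst = 0 := by
          apply hp.hom_ext
          · have := congrArg (· ≫ biprod.snd) hz1
            simpa using this
          · simpa using hz2
        have hz : z = (z ≫ biprod.snd) ≫ biprod.inr := by
          ext <;> simp [e1]
        ext
        · simpa using e1
        · rw [zero_comp]
          apply k2
          have := congrArg (· ≫ biprod.fst) hz1
          rw [hz] at this
          simpa using this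
      · have hsp : Spl (𝟙 A) (0 : A ⟶ (0 : C)) := ⟨𝟙 A, 0, by simp, by simp, by
          exact (isZero_zero C).eq_of_src _ _, by simp, by simp⟩
        refine (hE.sum_spl hsp).iso ⟨Iso.refl _, Iso.refl _, ⟨biprod.fst, biprod.inl, ?_, by simp⟩,
          by simp, ?_⟩
        · exact fst_inl_of_zero (isZero_zero C)
        · ext <;> simp

end PO

/-! ### the atom property -/

lemma wes_spl (𝒲 : WeaklyExactStructure C) {A B Z : C} {i : A ⟶ B} {d : B ⟶ Z} (h : Spl i d) :
    𝒲.W i d := by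
  refine 𝒲.iso_closed (𝒲.sum_mem (𝒲.id_zero_mem A) (𝒲.zero_id_mem Z)) ?_
  have h1 : Spl (𝟙 A) (0 : A ⟶ (0 : C)) := ⟨𝟙 A, 0, by simp, by simp, by
    exact (isZero_zero C).eq_of_src _ _, by simp, by simp⟩
  have h2 : Spl (0 : (0 : C) ⟶ Z) (𝟙 Z) := ⟨0, 𝟙 Z, by simp, by
    exact (isZero_zero C).eq_of_src _ _, by simp, by simp, by simp⟩
  refine spl_pairIso (h1.sum h2) h ⟨biprod.fst, biprod.inl, ?_, by simp⟩
    ⟨biprod.snd, biprod.inr, ?_, by simp⟩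
  · exact fst_inl_of_zero (isZero_zero C)
  · apply biprod.hom_ext'
    · exact (isZero_zero C).eq_of_src _ _
    · simp

lemma wes_of_monic (𝒲 : WeaklyExactStructure C) {A B Z B' Z' : C} {i : A ⟶ B} {d : B ⟶ Z}
    (h : 𝒲.W i d) {i' : A ⟶ B'} {d' : B' ⟶ Z'} (hk : IsKernelCokernelPair i' d') (b : B ≅ B')
    (hb : i ≫ b.hom = i') : 𝒲.W i' d' := by
  obtain ⟨k1, k2, k3, k4, k5⟩ := kc_iff.1 hk
  obtain ⟨l1, l2, l3, l4, l5⟩ := kc_iff.1 (𝒲.kc_of_mem h)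
  have hb' : i = i' ≫ b.inv := by simp [← hb]
  obtain ⟨x, hx⟩ := l5 (b.hom ≫ d') (by rw [reassoc_of% hb, k1])
  obtain ⟨y, hy⟩ := k5 (b.inv ≫ d) (by rw [← reassoc_of% hb', l1])
  refine 𝒲.iso_closed h ⟨Iso.refl _, b, ⟨x, y, ?_, ?_⟩, by simpa using hb, hx⟩
  · refine sub_eq_zero.1 (l3 _ ?_)
    simp [reassoc_of% hx, hy]
  · refine sub_eq_zero.1 (k3 _ ?_)
    simp [reassoc_of% hy, hx]

lemma wes_of_epic (𝒲 : WeaklyExactStructure C) {A B Z A' B' : C} {i : A ⟶ B} {d : B ⟶ Z}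
    (h : 𝒲.W i d) {i' : A' ⟶ B'} {d' : B' ⟶ Z} (hk : IsKernelCokernelPair i' d') (b : B ≅ B')
    (hb : b.hom ≫ d' = d) : 𝒲.W i' d' := by
  obtain ⟨k1, k2, k3, k4, k5⟩ := kc_iff.1 hk
  obtain ⟨l1, l2, l3, l4, l5⟩ := kc_iff.1 (𝒲.kc_of_mem h)
  have hb' : d' = b.inv ≫ d := by simp [← hb]
  obtain ⟨x, hx⟩ := k4 (i ≫ b.hom) (by rw [Category.assoc, hb, l1])
  obtain ⟨y, hy⟩ := l4 (i' ≫ b.inv) (by rw [Category.assoc, ← hb', k1])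
  refine 𝒲.iso_closed h ⟨⟨x, y, ?_, ?_⟩, b, Iso.refl _, hx.symm, by simp [hb]⟩
  · refine sub_eq_zero.1 (l2 _ ?_)
    simp [reassoc_of% hx, hy]
  · refine sub_eq_zero.1 (k2 _ ?_)
    simp [reassoc_of% hy, hx]

lemma wes_summand (𝒲 : WeaklyExactStructure C) {A B Z : C} {i : A ⟶ B} {d : B ⟶ Z}
    (hk : IsKernelCokernelPair i d) {T V E : C} {j : T ⟶ V} {e : V ⟶ E}
    (hk' : IsKernelCokernelPair j e) (h : 𝒲.W (biprod.map i j) (biprod.map d e)) : 𝒲.W i d := by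
  obtain ⟨k1, k2, k3, k4, k5⟩ := kc_iff.1 hk
  obtain ⟨l1, l2, l3, l4, l5⟩ := kc_iff.1 hk'
  obtain ⟨S, g, i', hp, Z', d', hW⟩ := 𝒲.pushout_mem h biprod.fst
  have hp0 : IsPushout (biprod.map i j) biprod.fst (biprod.map (𝟙 B) e) (i ≫ biprod.inl) := by
    refine mk_pushout ?_ ?_ ?_
    · ext <;> simp [l1]
    · intro W x y hxy
      have hx1 : i ≫ biprod.inl ≫ x = y := by
        have := congrArg (biprod.inl ≫ ·) hxy
        simpa using this
      have hx2 : j ≫ biprod.inr ≫ x = 0 := by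
        have := congrArg (biprod.inr ≫ ·) hxy
        simpa using this
      obtain ⟨c, hc⟩ := l5 _ hx2
      exact ⟨biprod.desc (biprod.inl ≫ x) c, by ext <;> simp [hc], by simp [hx1]⟩
    · intro W z hz1 hz2
      ext
      · have := congrArg (biprod.inl ≫ ·) hz1
        simpa using this
      · have := congrArg (biprod.inr ≫ ·) hz1
        simpa using l3 (biprod.inr ≫ z) (by simpa using this)
  have hsp : IsKernelCokernelPair (0 : (0 : C) ⟶ E) (𝟙 E) :=
    Spl.kc ⟨0, 𝟙 E, by simp, by exact (isZero_zero C).eq_of_src _ _, by simp, by simp, by simp⟩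
  have hk0 : IsKernelCokernelPair (i ≫ (biprod.inl : B ⟶ B ⊞ E)) (biprod.map d (𝟙 E)) := by
    refine kc_iso (kc_sum hk hsp) ⟨⟨biprod.fst, biprod.inl, ?_, by simp⟩, Iso.refl _,
      Iso.refl _, ?_, by simp⟩
    · exact fst_inl_of_zero (isZero_zero C)
    · ext <;> simp
  have hW0 := wes_of_monic 𝒲 hW hk0 (hp.isoIsPushout _ _ hp0) (by simp)
  obtain ⟨P, p, q, hq, A'', i'', hW'⟩ := 𝒲.pullback_mem hW0 (biprod.inl : Z ⟶ Z ⊞ E)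
  have hq0 : IsPullback (biprod.inl : B ⟶ B ⊞ E) d (biprod.map d (𝟙 E)) biprod.inl := by
    refine mk_pullback (by simp) ?_ ?_
    · intro W x y hxy
      have hx1 : x ≫ biprod.fst ≫ d = y := by
        have := congrArg (· ≫ biprod.fst) hxy
        simpa using this
      have hx2 : x ≫ biprod.snd = 0 := by
        have := congrArg (· ≫ biprod.snd) hxy
        simpa using this
      exact ⟨x ≫ biprod.fst, by ext <;> simp [hx2], by simp [hx1]⟩
    · intro W z hz1 hz2
      have := congrArg (· ≫ biprod.fst) hz1
      simpa using this
  exact wes_of_epic 𝒲 hW' hk (hq.isoIsPullback _ _ hq0) (by simp)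

lemma wes_eb (𝒲 : WeaklyExactStructure C) {A B Z : C} {i : A ⟶ B} {d : B ⟶ Z}
    (h : 𝒲.W i d) {T V E : C} {j : T ⟶ V} {e : V ⟶ E} (hE : EB i d j e) : 𝒲.W j e := by
  induction hE with
  | base h => exact wes_spl 𝒲 h
  | step _ k ih => exact 𝒲.iso_closed (𝒲.sum_mem h ih) k

/-- In a Hom-finite Krull–Schmidt category, the class `𝓔_α` generated by an almost split
sequence `α` is a weakly exact structure and is an atom in the lattice of weakly exact
structures: any weakly exact structure contained in `𝓔_α` is the split structure or `𝓔_α`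
itself. -/
theorem statement18 (k : Type w) [Field k] [Linear k C]
    [∀ X Y : C, FiniteDimensional k (X ⟶ Y)]
    (hKS : ∀ X : C, ∃ (n : ℕ) (f : Fin n → C),
      (∀ j, IsLocalRing (End (f j))) ∧ Nonempty (X ≅ ⨁ f))
    {A B Z : C} (i : A ⟶ B) (d : B ⟶ Z) (hα : IsAlmostSplit i d) :
    ∃ Eα : WeaklyExactStructure C,
      (∀ {A' B' Z' : C} (i' : A' ⟶ B') (d' : B' ⟶ Z'), Eα.W i' d' ↔ InEAlpha i d i' d') ∧
      ∀ 𝒲 : WeaklyExactStructure C,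
        (∀ {A' B' Z' : C} (i' : A' ⟶ B') (d' : B' ⟶ Z'), 𝒲.W i' d' → Eα.W i' d') →
        ((∀ {A' B' Z' : C} (i' : A' ⟶ B') (d' : B' ⟶ Z'), 𝒲.W i' d' ↔ IsSplitPair i' d') ∨
         (∀ {A' B' Z' : C} (i' : A' ⟶ B') (d' : B' ⟶ Z'), 𝒲.W i' d' ↔ Eα.W i' d')) := by
  classical
  obtain ⟨hk, hns, hA, hZ, hl, hr⟩ := hα
  have cA := compl_of_KS hKS hA
  have cZ := compl_of_KS hKS hZ
  have h0 : ∀ u : A ⟶ A, ∃ w : B ⟶ B, i ≫ w = u ≫ i := by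
    intro u
    apply hl
    rintro ⟨r, hr⟩
    rw [Category.assoc] at hr
    have := endo_split hA (cA A) hr
    exact hns (spl_iff.1 (spl_of_splitMono hk (r := r ≫ u) (by simpa using this)))
  have h0' : ∀ u : Z ⟶ Z, ∃ w : B ⟶ B, w ≫ d = d ≫ u := by
    intro u
    apply hr
    rintro ⟨s, hs⟩
    rw [← Category.assoc] at hs
    have := endo_split hZ (cZ Z) hs
    exact hns (spl_iff.1 (spl_of_splitEpi hk (s := u ≫ s) (by simpa using this)))
  refine ⟨{ W := fun _ _ _ j e => EB i d j e
            kc_of_mem := fun h => h.kc hk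
            iso_closed := fun h h' => h.iso h'
            sum_mem := fun h h' => h.sum h'
            id_zero_mem := fun X => .base ⟨𝟙 X, 0, by simp, by simp, by
              exact (isZero_zero C).eq_of_src _ _, by simp, by simp⟩
            zero_id_mem := fun X => .base ⟨0, 𝟙 X, by simp, by
              exact (isZero_zero C).eq_of_src _ _, by simp, by simp, by simp⟩
            pushout_mem := fun h t => eb_pushout hk h0 hl cA h t
            pullback_mem := fun h t => eb_pullback hk h0' hr cZ h t }, ?_, ?_⟩
  · intro A' B' Z' i' d'
    exact eb_iff
  · intro 𝒲 h𝒲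
    by_cases hex : 𝒲.W i d
    · right
      intro A' B' Z' i' d'
      exact ⟨fun h => h𝒲 _ _ h, fun h => wes_eb 𝒲 hex h⟩
    · left
      intro A' B' Z' i' d'
      refine ⟨fun h => ?_, fun h => wes_spl 𝒲 (spl_iff.2 h)⟩
      have hE : EB i d i' d' := h𝒲 _ _ h
      cases hE with
      | base h => exact spl_iff.1 h
      | step h1 k =>
        exact absurd (wes_summand 𝒲 hk (h1.kc hk) (𝒲.iso_closed h k.symm')) hex

end Statement

end WeaklyExactPaper
end
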